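/- Let n ≥ 2, let D be a digital n-object, and let e be an (n−2)-hub of D. Then b_{n−1}(e, D) = 4, i.e. exactly 4 free (n−1)-cells of D are bounded by e. -/

import Mathlib

/-!
An `(n-2)`-cell `e` has exactly two even coordinates `a ≠ b`, so the `(n-1)`-cells bounded by `e`
are the four cells obtained by moving `e` one step up or down in direction `a` or `b`
(`eq_update_of_bounds`). Over a hub, the two voxels `v`, `w` of `D` around `e` lie on opposite sides
of `e` in both directions, so these four cells are `e` with its coordinate `a` or `b` replaced by
that of `v` or of `w`. The cell with the coordinate `v a`, say, bounds `v ∈ D`; it also bounds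
the voxel obtained from `v` by reflecting it to the side of `w` in direction `b`. That voxel belongs
to the block of `e` and differs from both `v` and `w`, hence it is not in `D`, and the cell is free
(`update_mem_free`).
-/

namespace DigitalGeometry

/-- The dimension of a cell of the cubical grid (doubled coordinates):
the number of odd coordinates. -/
def cdim {n : ℕ} (c : Fin n → ℤ) : ℕ :=
  (Finset.univ.filter fun j => Odd (c j)).card

/-- The bounding relation `e < f` between cells of the grid. -/
def Bounds {n : ℕ} (e f : Fin n → ℤ) : Prop :=
  cdim e < cdim f ∧ ∀ j, e j = f j ∨ (Odd (f j) ∧ |e j - f j| = 1)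

/-- A voxel is an `n`-cell: all coordinates odd. -/
def IsVoxel {n : ℕ} (v : Fin n → ℤ) : Prop := ∀ j, Odd (v j)

/-- The `i`-block centered on an `i`-cell `e`: all voxels bounded by `e`. -/
def Block {n : ℕ} (e : Fin n → ℤ) : Set (Fin n → ℤ) :=
  {v | IsVoxel v ∧ Bounds e v}

/-- `Cells D i` : the `i`-cells of the object `D` (for `i < n` those bounding
some voxel of `D`; for `i = n` it is `D` itself). -/
def Cells {n : ℕ} (D : Set (Fin n → ℤ)) (i : ℕ) : Set (Fin n → ℤ) :=
  {e | cdim e = i ∧ (e ∈ D ∨ ∃ v ∈ D, Bounds e v)}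

/-- `c_i(D)` : the number of `i`-cells of `D`. -/
noncomputable def cCount {n : ℕ} (D : Set (Fin n → ℤ)) (i : ℕ) : ℕ := (Cells D i).ncard

/-- The free `i`-cells of `D`: those whose `i`-block is not contained in `D`. -/
def FreeCells {n : ℕ} (D : Set (Fin n → ℤ)) (i : ℕ) : Set (Fin n → ℤ) :=
  {e | e ∈ Cells D i ∧ ¬ Block e ⊆ D}

/-- `c*_i(D)` : the number of free `i`-cells of `D`. -/
noncomputable def cStar {n : ℕ} (D : Set (Fin n → ℤ)) (i : ℕ) : ℕ := (FreeCells D i).ncard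

/-- The non-free `i`-cells of `D`. -/
def NonFreeCells {n : ℕ} (D : Set (Fin n → ℤ)) (i : ℕ) : Set (Fin n → ℤ) :=
  {e | e ∈ Cells D i ∧ Block e ⊆ D}

/-- `c'_i(D)` : the number of non-free `i`-cells of `D`. -/
noncomputable def cPrime {n : ℕ} (D : Set (Fin n → ℤ)) (i : ℕ) : ℕ := (NonFreeCells D i).ncard

/-- `InterCell v1 v2 e` : the intersection of the voxels `v1`, `v2`
(as subsets of `ℝ^n`) equals the cell `e`. -/
def InterCell {n : ℕ} (v1 v2 e : Fin n → ℤ) : Prop :=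
  ∀ j, (v1 j = v2 j ∧ e j = v1 j) ∨
       (e j + 1 = max (v1 j) (v2 j) ∧ e j - 1 = min (v1 j) (v2 j))

/-- `e` is an `(n-2)`-hub of `D`, i.e. `D` has an `(n-2)`-gap over `e`. -/
def IsHub {n : ℕ} (D : Set (Fin n → ℤ)) (e : Fin n → ℤ) : Prop :=
  cdim e = n - 2 ∧ ∃ v1 v2 : Fin n → ℤ, v1 ≠ v2 ∧
    Block e ∩ D = {v1, v2} ∧ InterCell v1 v2 e

/-- `g_{n-2}(D)` : the number of `(n-2)`-gaps of `D`. -/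
noncomputable def gapCount {n : ℕ} (D : Set (Fin n → ℤ)) : ℕ := {e | IsHub D e}.ncard

/-- `b_j(e, D)` : the number of free `j`-cells of `D` bounded by `e`. -/
noncomputable def bcount {n : ℕ} (e : Fin n → ℤ) (D : Set (Fin n → ℤ)) (j : ℕ) : ℕ :=
  {f | f ∈ FreeCells D j ∧ Bounds e f}.ncard

/-- Two voxels are `i`-adjacent if they are distinct and their intersection
contains an `i`-cell. -/
def Adj {n : ℕ} (i : ℕ) (v1 v2 : Fin n → ℤ) : Prop :=
  v1 ≠ v2 ∧ ∃ e : Fin n → ℤ, cdim e = i ∧ Bounds e v1 ∧ Bounds e v2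

theorem cdim_add_even {n : ℕ} (c : Fin n → ℤ) :
    cdim c + (Finset.univ.filter fun j => Even (c j)).card = n := by
  have h := Finset.card_filter_add_card_filter_not (s := (Finset.univ : Finset (Fin n)))
    (fun j => Odd (c j))
  simpa [cdim, Int.not_odd_iff_even] using h

theorem cdim_voxel {n : ℕ} {v : Fin n → ℤ} (hv : IsVoxel v) : cdim v = n := by
  simp [cdim, Finset.filter_true_of_mem fun j _ => hv j]

/-- A cell whose only even coordinate is the one of index `b` has dimension `n - 1`. -/
theorem cdim_of_even_iff {n : ℕ} {c : Fin n → ℤ} {b : Fin n} (h : ∀ j, Even (c j) ↔ j = b) :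
    cdim c + 1 = n := by
  have h1 := cdim_add_even c
  have h2 : (Finset.univ.filter fun j => Even (c j)) = {b} := by ext j; simp [h]
  rwa [h2, Finset.card_singleton] at h1

theorem even_iff_of_update {n : ℕ} {e : Fin n → ℤ} {a b : Fin n} (hab : a ≠ b)
    (hE : ∀ j, Even (e j) ↔ j = a ∨ j = b) {x : ℤ} (hx : Odd x) (j : Fin n) :
    Even (Function.update e a x j) ↔ j = b := by
  rcases eq_or_ne j a with rfl | hj
  · simp [Int.not_even_iff_odd.mpr hx, hab]
  · simp [Function.update_of_ne hj, hE, hj]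

/-- A face of `e` pointing towards the voxel `v` in direction `a` is a free `(n-1)`-cell of `D`
bounded by `e`, when `v` and `w` are the only voxels of `D` around `e` and they lie on opposite
sides of `e` in both even directions `a`, `b` of `e`. -/
theorem update_mem_free {n : ℕ} (hn : 2 ≤ n) {D : Set (Fin n → ℤ)} {e v w : Fin n → ℤ}
    {a b : Fin n} (hab : a ≠ b) (hE : ∀ j, Even (e j) ↔ j = a ∨ j = b) (he : cdim e = n - 2)
    (hB : Block e ∩ D = {v, w}) (ha : v a ≠ w a) (hb : v b ≠ w b) :
    Function.update e a (v a) ∈ {f | f ∈ FreeCells D (n - 1) ∧ Bounds e f} := by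
  have hv : v ∈ Block e ∩ D := by rw [hB]; simp
  have hw : w ∈ Block e ∩ D := by rw [hB]; simp
  obtain ⟨⟨hvv, -, hve⟩, hvD⟩ := hv
  obtain ⟨⟨hwv, -, hwe⟩, -⟩ := hw
  have hd : cdim (Function.update e a (v a)) + 1 = n :=
    cdim_of_even_iff (even_iff_of_update hab hE (hvv a))
  -- `u` is `v` reflected to the side of `w` in direction `b`
  set u := Function.update v b (w b) with hu
  have huv : IsVoxel u := by
    intro j
    rcases eq_or_ne j b with rfl | hj
    · simpa [hu] using hwv j
    · simpa [hu, Function.update_of_ne hj] using hvv j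
  have hue : ∀ j, e j = u j ∨ (Odd (u j) ∧ |e j - u j| = 1) := by
    intro j
    rcases eq_or_ne j b with rfl | hj
    · simpa [hu] using hwe j
    · simpa [hu, Function.update_of_ne hj] using hve j
  have hua : u a = v a := by simp [hu, Function.update_of_ne hab]
  have hub : u b = w b := by simp [hu]
  -- a voxel around `e` on the side of `v` in direction `a` is bounded by the face
  have face : ∀ x : Fin n → ℤ, IsVoxel x → x a = v a →
      (∀ j, e j = x j ∨ (Odd (x j) ∧ |e j - x j| = 1)) →
      Bounds (Function.update e a (v a)) x := by
    intro x hx hxa hxe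
    refine ⟨by rw [cdim_voxel hx]; omega, fun j => ?_⟩
    rcases eq_or_ne j a with rfl | hj
    · simp [hxa]
    · simpa [Function.update_of_ne hj] using hxe j
  refine ⟨⟨⟨by omega, Or.inr ⟨v, hvD, face v hvv rfl hve⟩⟩, fun hsub => ?_⟩, by omega, fun j => ?_⟩
  · have huD : u ∈ D := hsub ⟨huv, face u huv hua hue⟩
    have : u ∈ Block e ∩ D := ⟨⟨huv, by rw [cdim_voxel huv]; omega, hue⟩, huD⟩
    rw [hB] at this
    rcases this with h | h
    · exact hb (by rw [← hub, h])
    · exact ha (by rw [← hua, Set.mem_singleton_iff.mp h])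
  · rcases eq_or_ne j a with rfl | hj
    · simpa using hve j
    · simp [Function.update_of_ne hj]

/-- A cell bounded by `e`, whose only even coordinate is the one of index `b`, differs from `e`
only in direction `a`, by one step. -/
theorem eq_update_of_bounds {n : ℕ} {e f : Fin n → ℤ} {a b : Fin n} (hab : a ≠ b)
    (hE : ∀ j, Even (e j) ↔ j = a ∨ j = b) (hF : ∀ j, Even (f j) ↔ j = b) (h : Bounds e f) :
    f = Function.update e a (f a) ∧ |e a - f a| = 1 := by
  refine ⟨?_, ?_⟩
  · ext j
    rcases eq_or_ne j a with rfl | hj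
    · simp
    · rw [Function.update_of_ne hj]
      rcases h.2 j with h1 | ⟨h1, h2⟩
      · exact h1.symm
      · have hjb : j ≠ b := fun hjb => Int.not_even_iff_odd.mpr h1 ((hF j).2 hjb)
        have h3 : ¬ Even (e j) := by rw [hE]; tauto
        rw [Int.not_even_iff_odd] at h3
        have h4 := h3.sub_odd h1
        rw [← even_abs, h2] at h4
        exact absurd h4 (by decide)
  · rcases h.2 a with h1 | h1
    · exact absurd ((hF a).1 (h1 ▸ (hE a).2 (Or.inl rfl))) hab
    · exact h1.2

/-- If `e` is an `(n-2)`-hub of `D`, then `b_{n-1}(e, D) = 4`. -/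
theorem bcount_of_hub (n : ℕ) (hn : 2 ≤ n) (D : Set (Fin n → ℤ))
    (hfin : D.Finite) (hvox : ∀ v ∈ D, IsVoxel v)
    (e : Fin n → ℤ) (he : IsHub D e) :
    bcount e D (n - 1) = 4 := by
  obtain ⟨hed, v, w, -, hB, hI⟩ := he
  have hcard := cdim_add_even e
  obtain ⟨a, b, hab, hEab⟩ := Finset.card_eq_two.1
    (show (Finset.univ.filter fun j => Even (e j)).card = 2 by omega)
  have hE : ∀ j, Even (e j) ↔ j = a ∨ j = b := fun j => by
    simpa using Finset.ext_iff.1 hEab j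
  have hE' : ∀ j, Even (e j) ↔ j = b ∨ j = a := fun j => by rw [hE, or_comm]
  have hvD : v ∈ Block e ∩ D := by rw [hB]; simp
  have hopp : ∀ j, Even (e j) →
      (v j = e j + 1 ∧ w j = e j - 1) ∨ (v j = e j - 1 ∧ w j = e j + 1) := by
    intro j hj
    rcases hI j with ⟨-, h⟩ | h
    · exact absurd hj (Int.not_even_iff_odd.mpr (h ▸ hvD.1.1 j))
    · omega
  have hoa := hopp a ((hE a).2 (Or.inl rfl))
  have hob := hopp b ((hE b).2 (Or.inr rfl))
  have hB' : Block e ∩ D = {w, v} := by rw [hB, Set.pair_comm]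
  have hset : {f | f ∈ FreeCells D (n - 1) ∧ Bounds e f} =
      ({Function.update e a (v a), Function.update e a (w a),
        Function.update e b (v b), Function.update e b (w b)} : Set (Fin n → ℤ)) := by
    apply Set.Subset.antisymm
    · rintro f ⟨⟨⟨hf, -⟩, -⟩, hef⟩
      have hfc := cdim_add_even f
      obtain ⟨k, hk⟩ := Finset.card_eq_one.1
        (show (Finset.univ.filter fun j => Even (f j)).card = 1 by omega)
      have hF : ∀ j, Even (f j) ↔ j = k := fun j => by
        simpa using Finset.ext_iff.1 hk j
      have hke : Even (e k) := by
        have hfk := (hF k).2 rfl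
        rcases hef.2 k with h | h
        · rwa [h]
        · exact absurd hfk (Int.not_even_iff_odd.mpr h.1)
      simp only [Set.mem_insert_iff, Set.mem_singleton_iff]
      rcases (hE k).1 hke with rfl | rfl
      · obtain ⟨h1, h2⟩ := eq_update_of_bounds hab.symm hE' hF hef
        have h3 : f b = v b ∨ f b = w b := by
          rcases (abs_eq zero_le_one).1 h2 with h | h <;> omega
        rcases h3 with h3 | h3 <;> rw [h3] at h1 <;> tauto
      · obtain ⟨h1, h2⟩ := eq_update_of_bounds hab hE hF hef
        have h3 : f a = v a ∨ f a = w a := by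
          rcases (abs_eq zero_le_one).1 h2 with h | h <;> omega
        rcases h3 with h3 | h3 <;> rw [h3] at h1 <;> tauto
    · have hna : v a ≠ w a := by omega
      have hnb : v b ≠ w b := by omega
      rintro f (rfl | rfl | rfl | rfl)
      · exact update_mem_free hn hab hE hed hB hna hnb
      · exact update_mem_free hn hab hE hed hB' hna.symm hnb.symm
      · exact update_mem_free hn hab.symm hE' hed hB hnb hna
      · exact update_mem_free hn hab.symm hE' hed hB' hnb.symm hna.symm
  have hcross : ∀ x y : ℤ, x ≠ e a → Function.update e a x ≠ Function.update e b y := by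
    intro x y hx h
    have := congrFun h a
    rw [Function.update_self, Function.update_of_ne hab] at this
    exact hx this
  have hva : v a ≠ e a := by omega
  have hwa : w a ≠ e a := by omega
  have h1 : Function.update e a (v a) ≠ Function.update e a (w a) := fun h => by
    have := Function.update_injective e a h
    omega
  have h2 : Function.update e b (v b) ≠ Function.update e b (w b) := fun h => by
    have := Function.update_injective e b h
    omega
  rw [bcount, hset, Set.ncard_insert_of_notMem, Set.ncard_insert_of_notMem, Set.ncard_pair h2]
  · simp [hcross _ _ hwa]
  · simp [hcross _ _ hva, h1]

end DigitalGeometry
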